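/- Let N ≥ 1 and let A ∈ ℝ^{N×N} be a symmetric tridiagonal matrix with A_{1,1} = 1, A_{i,i} = 2 for i = 2, …, N, |A_{i,i+1}| ≤ 1 for i = 1, …, N−1, and A_{i,j} = 0 for |i − j| ≥ 2. Then the determinant of every leading principal k×k submatrix A^{(k)} of A satisfies det A^{(k)} ≥ det A^{(k−1)} ≥ 1 for 2 ≤ k ≤ N; in particular det A ≥ 1 and A is invertible. -/

import Mathlib

/-!
Write `D k` for the determinant of the leading `k × k` block and `b` for the entry coupling the
last two rows of the block of size `k + 2`. Expanding along the last row and then the last column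
gives the three-term recurrence `D (k + 2) = 2 * D (k + 1) - b ^ 2 * D k`
(`det_eq_of_tridiagonal_corner`). Since `b ^ 2 ≤ 1`, the inequalities `1 ≤ D k ≤ D (k + 1)` give
`D (k + 2) ≥ 2 * D (k + 1) - D k ≥ D (k + 1)`, so they propagate by induction from
`D 0 = D 1 = 1` (`one_le_det_and_det_le_det_succ`).
-/

/-- The continuant recurrence. Only the last row and the last column need to be tridiagonal. -/
theorem det_eq_of_tridiagonal_corner {R : Type*} [CommRing R] {n : ℕ}
    (M : Matrix (Fin (n + 2)) (Fin (n + 2)) R)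
    (hrow : ∀ j : Fin n, M (Fin.last (n + 1)) j.castSucc.castSucc = 0)
    (hcol : ∀ i : Fin n, M i.castSucc.castSucc (Fin.last (n + 1)) = 0) :
    M.det = M (Fin.last (n + 1)) (Fin.last (n + 1)) *
        (M.submatrix Fin.castSucc Fin.castSucc).det
      - M (Fin.last (n + 1)) (Fin.last n).castSucc * M (Fin.last n).castSucc (Fin.last (n + 1)) *
        (M.submatrix (fun i : Fin n => i.castSucc.castSucc)
          (fun i : Fin n => i.castSucc.castSucc)).det := by
  have hlast : (Fin.last n).castSucc.succAbove (Fin.last n) = Fin.last (n + 1) := by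
    rw [Fin.succAbove_castSucc_self, Fin.succ_last]
  have hinit : ∀ i : Fin n,
      (Fin.last n).castSucc.succAbove i.castSucc = i.castSucc.castSucc := fun i =>
    Fin.succAbove_of_castSucc_lt _ _ (Fin.castSucc_lt_castSucc_iff.2 (Fin.castSucc_lt_last i))
  -- The minor obtained by deleting the last row and the second-to-last column.
  have hminor : (M.submatrix Fin.castSucc (Fin.last n).castSucc.succAbove).det =
      M (Fin.last n).castSucc (Fin.last (n + 1)) *
        (M.submatrix (fun i : Fin n => i.castSucc.castSucc)
          (fun i : Fin n => i.castSucc.castSucc)).det := by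
    rw [Matrix.det_succ_column _ (Fin.last n), Fin.sum_univ_castSucc]
    simp only [Matrix.submatrix_apply, hlast, hcol, Matrix.submatrix_submatrix,
      Function.comp_def, Fin.succAbove_last, hinit, mul_zero, zero_mul, Finset.sum_const_zero,
      zero_add, Fin.val_last, Even.neg_one_pow ⟨n, rfl⟩, one_mul]
  rw [Matrix.det_succ_row _ (Fin.last (n + 1)), Fin.sum_univ_castSucc, Fin.sum_univ_castSucc]
  simp only [hrow, Fin.succAbove_last, hminor, mul_zero, zero_mul, Finset.sum_const_zero, zero_add,
    Fin.val_last, Fin.val_castSucc]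
  have h1 : (-1 : R) ^ (n + 1 + n) = -1 := Odd.neg_one_pow ⟨n, by ring⟩
  have h2 : (-1 : R) ^ (n + 1 + (n + 1)) = 1 := Even.neg_one_pow ⟨n + 1, rfl⟩
  rw [h1, h2]
  ring

/-- The induction starts at the empty block, whose determinant is `1`. -/
theorem one_le_det_and_det_le_det_succ (N : ℕ) (A : Matrix (Fin N) (Fin N) ℝ)
    (hsymm : A.IsSymm)
    (h11 : ∀ i : Fin N, (i : ℕ) = 0 → A i i = 1)
    (hdiag : ∀ i : Fin N, (i : ℕ) ≠ 0 → A i i = 2)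
    (hoff : ∀ i j : Fin N, (j : ℕ) = (i : ℕ) + 1 → |A i j| ≤ 1)
    (hzero : ∀ i j : Fin N, ((i : ℕ) + 2 ≤ (j : ℕ) ∨ (j : ℕ) + 2 ≤ (i : ℕ)) → A i j = 0)
    (k : ℕ) (hk : k ≤ N) (hk' : k + 1 ≤ N) :
    1 ≤ (A.submatrix (Fin.castLE hk) (Fin.castLE hk)).det ∧
      (A.submatrix (Fin.castLE hk) (Fin.castLE hk)).det ≤
        (A.submatrix (Fin.castLE hk') (Fin.castLE hk')).det := by
  induction k with
  | zero => simp [h11]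
  | succ k ih =>
    obtain ⟨h1, h2⟩ := ih (by omega) hk
    refine ⟨h1.trans h2, ?_⟩
    have hrec := det_eq_of_tridiagonal_corner (A.submatrix (Fin.castLE hk') (Fin.castLE hk'))
      (fun j => hzero _ _ (Or.inr (by simp)))
      (fun i => hzero _ _ (Or.inl (by simp)))
    have hb := hoff (Fin.castLE hk' (Fin.last k).castSucc) (Fin.castLE hk' (Fin.last (k + 1)))
      (by simp)
    simp only [Matrix.submatrix_submatrix, Matrix.submatrix_apply, Function.comp_def,
      Fin.castLE_castSucc] at hrec hb
    rw [hdiag _ (by simp), hsymm.apply] at hrec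
    have hb2 := (sq_le_one_iff_abs_le_one _).2 hb
    rw [hrec]
    change _ ≤ 2 * (A.submatrix (Fin.castLE hk) (Fin.castLE hk)).det - _ *
      (A.submatrix (Fin.castLE (Nat.le_of_succ_le hk)) (Fin.castLE (Nat.le_of_succ_le hk))).det
    nlinarith [mul_le_mul_of_nonneg_right hb2 (zero_le_one.trans h1)]

/-- Let `A ∈ ℝ^{N×N}` be symmetric tridiagonal with `A_{1,1} = 1`, `A_{i,i} = 2`
for `i ≥ 2`, `|A_{i,i+1}| ≤ 1`, and `A_{i,j} = 0` for `|i - j| ≥ 2`. Then the determinants of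
the leading principal submatrices `A^{(k)}` satisfy `det A^{(k)} ≥ det A^{(k-1)} ≥ 1` for
`2 ≤ k ≤ N`; in particular `det A ≥ 1` and `A` is invertible. (Fin index `i` corresponds to
math index `i+1`.) -/
theorem stmt_5 (N : ℕ) (hN : 1 ≤ N) (A : Matrix (Fin N) (Fin N) ℝ)
    (hsymm : A.IsSymm)
    (h11 : ∀ i : Fin N, (i : ℕ) = 0 → A i i = 1)
    (hdiag : ∀ i : Fin N, (i : ℕ) ≠ 0 → A i i = 2)
    (hoff : ∀ i j : Fin N, (j : ℕ) = (i : ℕ) + 1 → |A i j| ≤ 1)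
    (hzero : ∀ i j : Fin N, ((i : ℕ) + 2 ≤ (j : ℕ) ∨ (j : ℕ) + 2 ≤ (i : ℕ)) → A i j = 0) :
    (∀ (k : ℕ) (_ : 2 ≤ k) (hk : k ≤ N),
      (A.submatrix (Fin.castLE (le_trans (Nat.sub_le k 1) hk))
          (Fin.castLE (le_trans (Nat.sub_le k 1) hk))).det
        ≤ (A.submatrix (Fin.castLE hk) (Fin.castLE hk)).det ∧
      1 ≤ (A.submatrix (Fin.castLE (le_trans (Nat.sub_le k 1) hk))
          (Fin.castLE (le_trans (Nat.sub_le k 1) hk))).det) ∧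
    1 ≤ A.det ∧ IsUnit A.det := by
  have key := one_le_det_and_det_le_det_succ N A hsymm h11 hdiag hoff hzero
  have hdet : 1 ≤ A.det := by
    obtain ⟨n, rfl⟩ : ∃ n, N = n + 1 := ⟨N - 1, by omega⟩
    have h := key n (Nat.le_succ n) le_rfl
    simpa using h.1.trans h.2
  refine ⟨fun k hk2 hk => ?_, hdet, (zero_lt_one.trans_le hdet).ne'.isUnit⟩
  obtain ⟨m, rfl⟩ : ∃ m, k = m + 1 := ⟨k - 1, by omega⟩
  exact (key m (Nat.le_of_succ_le hk) hk).symm
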